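/- Every Moufang loop is diassociative with respect to powers and products of two elements in the following weak sense: in a loop satisfying $x(y(xz))=((xy)x)z$, any two elements generate a subloop that is associative (a group). -/

import Mathlib

/-- The subloop generated by two elements: the smallest subset containing
`a`, `b`, the neutral element `e`, and closed under `mul`, `ld`, `rd`. -/
def genSubloop {Q : Type*} (mul ld rd : Q → Q → Q) (e a b : Q) : Set Q :=
  ⋂₀ {T : Set Q | a ∈ T ∧ b ∈ T ∧ e ∈ T ∧
    (∀ x ∈ T, ∀ y ∈ T, mul x y ∈ T) ∧
    (∀ x ∈ T, ∀ y ∈ T, ld x y ∈ T) ∧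
    (∀ x ∈ T, ∀ y ∈ T, rd x y ∈ T)}

/-!
By induction on its length `n`, a word in `a, a⁻¹, b, b⁻¹` has the same product however it is
bracketed. Extend the word to `g : ℤ → Q` with `g (i + n) = (g i)⁻¹`, and cut each window
`g i, …, g (i + n - 1)` at a point `s` into two shorter words. By the middle Moufang identity,
`y ↦ (g i * y) * g i` carries the product of the window at `i + 1` cut at `s` to that of the window
at `i` cut at `s`, provided that `s` is read modulo `n - 1`. So whether two cuts give the same
product does not depend on the window, and the product is a function of `s` with period `n - 1`.
If `g i = g (i + d)` with `0 < d < n - 1`, the left Moufang identity compares the cuts at `i + 1`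
and `i + 1 + d`; as `g (i + m * n) = g (i + m * n + d)` and `m * n ≡ m` modulo `n - 1`, the number
`d` is a period as well. With only two generators, either two neighbours are equal or inverse to
each other, or the generators alternate; then `n - 1` is odd and `4` is a period.
-/

section Integers

theorem intRange_eq_cons {s t : ℤ} (h : s < t) :
    Int.range s t = s :: Int.range (s + 1) t := by
  obtain ⟨k, hk⟩ : ∃ k : ℕ, (t - s).toNat = k + 1 := ⟨(t - s).toNat - 1, by omega⟩
  have hk' : (t - (s + 1)).toNat = k := by omega
  simp [Int.range, hk, hk', List.range_succ_eq_map, Function.comp_def, add_assoc, add_comm (1 : ℤ)]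

theorem intRange_append_intRange {r s t : ℤ} (hrs : r ≤ s) (hst : s ≤ t) :
    Int.range r s ++ Int.range s t = Int.range r t := by
  have hlen : (t - r).toNat = (s - r).toNat + (t - s).toNat := by omega
  simp only [Int.range, hlen, List.range_add, List.map_append, List.map_map,
    List.append_cancel_left_eq, List.map_inj_left, Function.comp_apply]
  omega

theorem length_intRange (s t : ℤ) : (Int.range s t).length = (t - s).toNat := by
  simp [Int.range]

theorem periodic_one_of_isCoprime {α : Type*} {f : ℤ → α} {c d : ℤ}
    (hc : Function.Periodic f c) (hd : Function.Periodic f d) (h : IsCoprime c d) :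
    Function.Periodic f 1 := by
  obtain ⟨u, v, huv⟩ := h
  simpa [huv] using (hc.int_mul u).add_period (hd.int_mul v)

theorem eq_of_periodic_one {α : Type*} {f : ℤ → α} (h : Function.Periodic f 1) (s t : ℤ) :
    f s = f t := by
  simpa using (h.int_mul (s - t)) t

theorem even_of_alternating {P : ℤ → Prop} (hP : ∀ i, P (i + 1) ↔ ¬P i) {n : ℤ}
    (hn : P n ↔ P 0) : Even n := by
  have hper : Function.Periodic P 2 := fun i ↦ propext <| by
    rw [← one_add_one_eq_two, ← add_assoc, hP, hP, not_not]
  by_contra hodd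
  obtain ⟨m, rfl⟩ := Int.not_even_iff_odd.1 hodd
  rw [hP, mul_comm, (show P (m * 2) = P 0 from hper.int_mul_eq m)] at hn
  exact not_iff_self hn

end Integers

/-! ### Sequences of letters -/

/-- Shifting the sequence by `n` inverts its terms: the multiplicative analogue of
`Function.Antiperiodic`. -/
def InvAntiperiodic {Q : Type*} [Inv Q] (g : ℤ → Q) (n : ℤ) : Prop :=
  ∀ i, g (i + n) = (g i)⁻¹

/-- The letters of words in the generators `a` and `b`. -/
def letters {Q : Type*} [Inv Q] (a b : Q) : Set Q :=
  {a, a⁻¹} ∪ {b, b⁻¹}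

section Inv

variable {Q : Type*} [InvolutiveInv Q] {a b : Q} {g : ℤ → Q} {p : ℤ}

theorem InvAntiperiodic.eq_add_mul (hinv : InvAntiperiodic g p) {i d : ℤ} (h : g i = g (i + d))
    (m : ℤ) : g (i + m * p) = g (i + m * p + d) := by
  have hper : Function.Periodic (fun j ↦ g j = g (j + d)) p := fun j ↦ propext <| by
    beta_reduce
    rw [add_right_comm, hinv, hinv, inv_inj]
  exact (hper.int_mul m i).mpr h

theorem inv_mem_letters {x : Q} (hx : x ∈ letters a b) : x⁻¹ ∈ letters a b := by
  rcases hx with (rfl | rfl) | (rfl | rfl) <;> simp [letters]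

theorem eq_or_eq_inv_of_mem_pair {c x y : Q} (hx : x ∈ ({c, c⁻¹} : Set Q))
    (hy : y ∈ ({c, c⁻¹} : Set Q)) : y = x ∨ y = x⁻¹ := by
  rcases hx with rfl | rfl <;> rcases hy with rfl | rfl <;> simp

theorem inv_mem_pair_iff {c x : Q} :
    x⁻¹ ∈ ({c, c⁻¹} : Set Q) ↔ x ∈ ({c, c⁻¹} : Set Q) := by
  simp only [Set.mem_insert_iff, Set.mem_singleton_iff, inv_eq_iff_eq_inv, inv_inv, or_comm]

theorem mem_pair_add_one_iff (hmem : ∀ i, g i ∈ letters a b) (hne : ∀ i, g (i + 1) ≠ g i)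
    (hne_inv : ∀ i, g (i + 1) ≠ (g i)⁻¹) (i : ℤ) :
    g (i + 1) ∈ ({a, a⁻¹} : Set Q) ↔ g i ∉ ({a, a⁻¹} : Set Q) := by
  have not_both {c : Q} (h : g i ∈ ({c, c⁻¹} : Set Q)) : g (i + 1) ∉ ({c, c⁻¹} : Set Q) :=
    fun h' ↦ (eq_or_eq_inv_of_mem_pair h h').elim (hne i) (hne_inv i)
  exact ⟨fun h h' ↦ not_both h' h,
    fun h ↦ (hmem (i + 1)).resolve_right (not_both ((hmem i).resolve_left h))⟩

theorem eq_or_eq_inv_add_two (hmem : ∀ i, g i ∈ letters a b)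
    (halt : ∀ i, g (i + 1) ∈ ({a, a⁻¹} : Set Q) ↔ g i ∉ ({a, a⁻¹} : Set Q)) (i : ℤ) :
    g (i + 2) = g i ∨ g (i + 2) = (g i)⁻¹ := by
  have hiff : g (i + 2) ∈ ({a, a⁻¹} : Set Q) ↔ g i ∈ ({a, a⁻¹} : Set Q) := by
    rw [← one_add_one_eq_two, ← add_assoc, halt, halt, not_not]
  by_cases hi : g i ∈ ({a, a⁻¹} : Set Q)
  · exact eq_or_eq_inv_of_mem_pair hi (hiff.2 hi)
  · exact eq_or_eq_inv_of_mem_pair ((hmem i).resolve_left hi)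
      ((hmem (i + 2)).resolve_left (mt hiff.1 hi))

end Inv

/-! ### Segments and cuts -/

/-- The right-nested product `g s * (g (s + 1) * (⋯ * g (t - 1)))`, which is `1` if `t ≤ s`. -/
def segmentProd {Q : Type*} [Mul Q] [One Q] (g : ℤ → Q) (s t : ℤ) : Q :=
  ((Int.range s t).map g).prod

/-- The segments of `g` of length at most `p` may be multiplied as if `Q` were associative. -/
def AssocUpTo {Q : Type*} [Mul Q] [One Q] (g : ℤ → Q) (p : ℤ) : Prop :=
  ∀ r s t, r ≤ s → s ≤ t → t - r ≤ p →
    segmentProd g r s * segmentProd g s t = segmentProd g r t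

/-- The product of the window `g i, …, g (i + p)`, of length `p + 1`, with the brackets set by
cutting it in front of `g s`. -/
def cutProd {Q : Type*} [Mul Q] [One Q] (g : ℤ → Q) (p i s : ℤ) : Q :=
  segmentProd g i s * segmentProd g s (i + (p + 1))

/-- `cutProd` with the cut `s` read modulo `p`, that is, moved into `{i + 1, …, i + p}`. -/
noncomputable def cutModProd {Q : Type*} [Mul Q] [One Q] (g : ℤ → Q) {p : ℤ} (hp : 0 < p)
    (i s : ℤ) : Q :=
  cutProd g p i (toIocMod hp i s)

section Mul

variable {Q : Type*} [MulOneClass Q] {g : ℤ → Q} {p : ℤ}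

theorem segmentProd_self (s : ℤ) : segmentProd g s s = 1 := by
  simp [segmentProd, Int.range]

theorem segmentProd_eq_mul {s t : ℤ} (h : s < t) :
    segmentProd g s t = g s * segmentProd g (s + 1) t := by
  simp only [segmentProd, intRange_eq_cons h, List.map_cons, List.prod_cons]

theorem segmentProd_add_one (s : ℤ) : segmentProd g s (s + 1) = g s := by
  rw [segmentProd_eq_mul (lt_add_one s), segmentProd_self, mul_one]

theorem AssocUpTo.segmentProd_mul (hg : AssocUpTo g p) {s t : ℤ} (hst : s ≤ t)
    (htp : t + 1 - s ≤ p) : segmentProd g s t * g t = segmentProd g s (t + 1) := by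
  rw [← hg s t (t + 1) hst (by omega) htp, segmentProd_add_one]

theorem assocUpTo_of_prod_append {S : Set Q} {p : ℕ} (hmem : ∀ i, g i ∈ S)
    (happend : ∀ u v : List Q, (∀ x ∈ u ++ v, x ∈ S) → (u ++ v).length ≤ p →
      u.prod * v.prod = (u ++ v).prod) : AssocUpTo g p := by
  intro r s t hrs hst htr
  rw [segmentProd, segmentProd, happend, ← List.map_append, intRange_append_intRange hrs hst,
    segmentProd]
  · simp only [← List.map_append, List.forall_mem_map]
    exact fun i _ ↦ hmem i
  · simp only [List.length_append, List.length_map, length_intRange]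
    omega

theorem cutProd_add_one (hp : 0 < p) (i : ℤ) :
    cutProd g p i (i + 1) = segmentProd g i (i + (p + 1)) := by
  rw [cutProd, segmentProd_add_one, ← segmentProd_eq_mul (by omega)]

variable {hp : 0 < p}

theorem cutModProd_eq_cutProd {i s : ℤ} (his : i < s) (hsp : s ≤ i + p) :
    cutModProd g hp i s = cutProd g p i s := by
  rw [cutModProd, (toIocMod_eq_self hp).2 ⟨his, hsp⟩]

theorem cutModProd_periodic (i : ℤ) : Function.Periodic (cutModProd g hp i) p :=
  (toIocMod_periodic hp i).comp (cutProd g p i)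

end Mul

/-! ### The cyclic extension of a word -/

/-- The extension of the word `w` to a sequence indexed by `ℤ` whose consecutive blocks of length
`w.length` are alternately `w` and its letterwise inverse. For `w = []` it is constantly `1`. -/
def cyclicWord {Q : Type*} [One Q] [Inv Q] (w : List Q) (i : ℤ) : Q :=
  if Even (i / w.length) then w.getD (i % w.length).toNat 1
  else (w.getD (i % w.length).toNat 1)⁻¹

section CyclicWord

variable {Q : Type*}

theorem cyclicWord_invAntiperiodic [One Q] [InvolutiveInv Q] {w : List Q} (hw : w ≠ []) :
    InvAntiperiodic (cyclicWord w) w.length := by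
  intro i
  have hlen : (w.length : ℤ) ≠ 0 := by simpa using hw
  rw [cyclicWord, cyclicWord, Int.add_ediv_of_dvd_right dvd_rfl, Int.ediv_self hlen,
    Int.add_emod_right]
  by_cases hi : Even (i / w.length) <;> simp [hi]

theorem cyclicWord_mem_letters [One Q] [InvolutiveInv Q] {a b : Q} {w : List Q} (hw : w ≠ [])
    (hmem : ∀ x ∈ w, x ∈ letters a b) (i : ℤ) : cyclicWord w i ∈ letters a b := by
  have hlen : (0 : ℤ) < w.length := by simpa [List.length_pos_iff] using hw
  have hlt : (i % w.length).toNat < w.length := by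
    have := Int.emod_lt_of_pos i hlen
    omega
  have hletter : w.getD (i % w.length).toNat 1 ∈ letters a b := by
    rw [List.getD_eq_getElem _ _ hlt]
    exact hmem _ (List.getElem_mem hlt)
  unfold cyclicWord
  split_ifs
  · exact hletter
  · exact inv_mem_letters hletter

theorem map_cyclicWord_intRange [One Q] [Inv Q] (w : List Q) :
    (Int.range 0 w.length).map (cyclicWord w) = w := by
  refine List.ext_getElem (by simp [length_intRange]) fun k hk hkw ↦ ?_
  have hdiv : (k : ℤ) / w.length = 0 := by exact_mod_cast Nat.div_eq_of_lt hkw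
  have hmod : (k : ℤ) % w.length = k := by exact_mod_cast Nat.mod_eq_of_lt hkw
  simp [Int.range, cyclicWord, hdiv, hmod, hkw]

theorem segmentProd_cyclicWord_append [MulOneClass Q] [Inv Q] (u v : List Q) :
    segmentProd (cyclicWord (u ++ v)) 0 u.length = u.prod ∧
      segmentProd (cyclicWord (u ++ v)) u.length (u ++ v).length = v.prod ∧
      segmentProd (cyclicWord (u ++ v)) 0 (u ++ v).length = (u ++ v).prod := by
  have hmap := map_cyclicWord_intRange (u ++ v)
  refine and_assoc.1 ⟨?_, congrArg List.prod hmap⟩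
  rw [← intRange_append_intRange (s := u.length) (by omega) (by simp), List.map_append] at hmap
  obtain ⟨hu, hv⟩ := List.append_inj hmap (by simp [length_intRange])
  exact ⟨congrArg List.prod hu, congrArg List.prod hv⟩

end CyclicWord

/-! ### Moufang loops -/

/-- A Moufang loop, presented by its inverse map instead of its two divisions, which are
recovered as `x⁻¹ * y` and `x * y⁻¹`. -/
class MoufangLoop (Q : Type*) extends MulOneClass Q, Inv Q where
  protected inv_mul_cancel_left : ∀ x y : Q, x⁻¹ * (x * y) = y
  moufang : ∀ x y z : Q, x * (y * (x * z)) = ((x * y) * x) * z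

/-- A Moufang loop given by left divisions; the inverse of `x` is `ld x e`. -/
abbrev MoufangLoop.ofLeftDivision {Q : Type*} (mul ld : Q → Q → Q) (e : Q)
    (ld_mul : ∀ x y, ld x (mul x y) = y) (mul_ld : ∀ x y, mul x (ld x y) = y)
    (e_mul : ∀ x, mul e x = x) (mul_e : ∀ x, mul x e = x)
    (moufang : ∀ x y z, mul x (mul y (mul x z)) = mul (mul (mul x y) x) z) :
    MoufangLoop Q where
  mul := mul
  one := e
  inv x := ld x e
  one_mul := e_mul
  mul_one := mul_e
  moufang := moufang
  inv_mul_cancel_left x y := by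
    have h : mul x (mul (ld x e) (mul x y)) = mul x y := by rw [moufang, mul_ld, e_mul]
    exact (ld_mul x _).symm.trans ((congrArg (ld x) h).trans (ld_mul x y))

namespace MoufangLoop

variable {Q : Type*} [MoufangLoop Q]

protected theorem inv_mul_cancel (x : Q) : x⁻¹ * x = 1 := by
  simpa only [mul_one] using MoufangLoop.inv_mul_cancel_left x 1

instance : InvolutiveInv Q where
  inv_inv x := by
    simpa only [MoufangLoop.inv_mul_cancel, mul_one] using
      MoufangLoop.inv_mul_cancel_left x⁻¹ x

protected theorem mul_inv_cancel_left (x y : Q) : x * (x⁻¹ * y) = y := by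
  simpa only [inv_inv] using MoufangLoop.inv_mul_cancel_left x⁻¹ y

protected theorem mul_inv_cancel (x : Q) : x * x⁻¹ = 1 := by
  simpa only [inv_inv] using MoufangLoop.inv_mul_cancel x⁻¹

protected theorem mul_inv_cancel_right (x y : Q) : (x * y) * y⁻¹ = x := by
  have h := moufang y (y⁻¹ * x) y⁻¹
  rwa [MoufangLoop.mul_inv_cancel, mul_one, MoufangLoop.mul_inv_cancel_left, eq_comm] at h

protected theorem inv_mul_cancel_right (x y : Q) : (x * y⁻¹) * y = x := by
  simpa only [inv_inv] using MoufangLoop.mul_inv_cancel_right x y⁻¹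

instance : IsCancelMul Q where
  mul_left_cancel x y z h := by
    simpa only [MoufangLoop.inv_mul_cancel_left] using congrArg (x⁻¹ * ·) h
  mul_right_cancel x y z h := by
    simpa only [MoufangLoop.mul_inv_cancel_right] using congrArg (· * x⁻¹) h

protected theorem inv_one : (1 : Q)⁻¹ = 1 := by
  simpa only [mul_one] using MoufangLoop.inv_mul_cancel (1 : Q)

protected theorem mul_inv_rev (x y : Q) : (x * y)⁻¹ = y⁻¹ * x⁻¹ := by
  have h := MoufangLoop.inv_mul_cancel_left (x * y) y⁻¹
  rw [MoufangLoop.mul_inv_cancel_right] at h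
  rw [← h, MoufangLoop.mul_inv_cancel_right]

theorem flexible (x y : Q) : x * (y * x) = (x * y) * x := by
  simpa only [mul_one] using moufang x y 1

theorem middle_moufang (x y z : Q) : (x * y) * (z * x) = (x * (y * z)) * x := by
  have h := moufang x (y * z) (z * x)⁻¹
  rw [MoufangLoop.mul_inv_rev, MoufangLoop.mul_inv_cancel_left,
    MoufangLoop.mul_inv_cancel_right, ← MoufangLoop.mul_inv_rev] at h
  rw [h, MoufangLoop.inv_mul_cancel_right]

section Cuts

variable {g : ℤ → Q} {p : ℤ}

theorem cutProd_eq_cutProd_add_one_of_eq (hg : AssocUpTo g p) {i d : ℤ} (hd : 0 < d)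
    (hdp : d < p) (h : g i = g (i + d)) :
    cutProd g p i (i + 1 + d) = cutProd g p i (i + 1) := by
  rw [cutProd_add_one (by omega)]
  have hleft : segmentProd g i (i + 1 + d) = (g i * segmentProd g (i + 1) (i + d)) * g i := by
    rw [segmentProd_eq_mul (by omega), add_right_comm,
      ← hg.segmentProd_mul (by omega) (by omega), ← h, flexible]
  calc cutProd g p i (i + 1 + d)
    _ = g i * (segmentProd g (i + 1) (i + d) *
          (g (i + d) * segmentProd g (i + d + 1) (i + (p + 1)))) := by
      rw [cutProd, hleft, ← moufang, ← h, add_right_comm]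
    _ = g i * segmentProd g (i + 1) (i + (p + 1)) := by
      rw [← segmentProd_eq_mul (by omega), hg _ _ _ (by omega) (by omega) (by omega)]
    _ = segmentProd g i (i + (p + 1)) := (segmentProd_eq_mul (by omega)).symm

theorem cutProd_eq_of_ends_eq (hg : AssocUpTo g p) {i s : ℤ} (his : i < s) (hsp : s ≤ i + p)
    (h : g i = g (i + p)) :
    cutProd g p i s = (g i * segmentProd g (i + 1) (i + p)) * g i := by
  rw [cutProd, segmentProd_eq_mul his, ← add_assoc i p,
    ← hg.segmentProd_mul hsp (by omega), ← h, middle_moufang,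
    hg _ _ _ (by omega) hsp (by omega)]

theorem cutProd_eq_mul_cutProd_mul (hg : AssocUpTo g p) (hinv : InvAntiperiodic g (p + 1))
    {i s : ℤ} (his : i + 1 < s) (hsp : s ≤ i + p) :
    cutProd g p i s = (g i * cutProd g p (i + 1) s) * g i := by
  rw [cutProd, cutProd, add_right_comm i 1, ← hg.segmentProd_mul (by omega) (by omega), hinv,
    ← middle_moufang, MoufangLoop.inv_mul_cancel_right, ← segmentProd_eq_mul (by omega)]

theorem cutProd_add_one_eq_mul_cutProd_mul (hp : 0 < p) (hinv : InvAntiperiodic g (p + 1))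
    (i : ℤ) : cutProd g p i (i + 1) = (g i * cutProd g p (i + 1) (i + 1 + p)) * g i := by
  rw [cutProd_add_one hp, cutProd, ← add_assoc (i + 1), segmentProd_add_one, add_assoc i 1,
    add_comm 1 p, hinv, ← middle_moufang, MoufangLoop.inv_mul_cancel, mul_one,
    ← segmentProd_eq_mul (by omega)]

variable {hp : 0 < p}

theorem cutModProd_eq_mul_cutModProd_mul (hg : AssocUpTo g p)
    (hinv : InvAntiperiodic g (p + 1)) (i s : ℤ) :
    cutModProd g hp i s = (g i * cutModProd g hp (i + 1) s) * g i := by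
  obtain ⟨hlt, hle⟩ := toIocMod_mem_Ioc hp i s
  rw [cutModProd, cutModProd, ← toIocMod_toIocMod hp (i + 1) i s]
  rcases (show i + 1 ≤ toIocMod hp i s from hlt).eq_or_lt with heq | hlt
  · rw [← heq, toIocMod_apply_left, cutProd_add_one_eq_mul_cutProd_mul hp hinv]
  · rw [(toIocMod_eq_self hp).2 ⟨hlt, by omega⟩, cutProd_eq_mul_cutProd_mul hg hinv hlt hle]

theorem cutModProd_eq_iff (hg : AssocUpTo g p) (hinv : InvAntiperiodic g (p + 1))
    (i j s t : ℤ) : cutModProd g hp i s = cutModProd g hp i t ↔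
      cutModProd g hp j s = cutModProd g hp j t := by
  have hper : Function.Periodic (fun i ↦ cutModProd g hp i s = cutModProd g hp i t) 1 :=
    fun i ↦ propext <| by
      beta_reduce
      rw [cutModProd_eq_mul_cutModProd_mul hg hinv i s,
        cutModProd_eq_mul_cutModProd_mul hg hinv i t, mul_left_inj, mul_right_inj]
  exact iff_of_eq (eq_of_periodic_one hper i j)

theorem cutModProd_periodic_of_eq (hg : AssocUpTo g p) (hinv : InvAntiperiodic g (p + 1))
    {i d : ℤ} (hd : 0 < d) (hdp : d < p) (h : g i = g (i + d)) :
    Function.Periodic (cutModProd g hp 0) d := by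
  intro s
  obtain ⟨m, rfl⟩ : ∃ m, s = i + 1 + m := ⟨s - (i + 1), by ring⟩
  set j := i + m * (p + 1)
  have hcut : cutModProd g hp j (j + 1 + d) = cutModProd g hp j (j + 1) := by
    rw [cutModProd_eq_cutProd (by omega) (by omega), cutModProd_eq_cutProd (by omega) (by omega)]
    exact cutProd_eq_cutProd_add_one_of_eq hg hd hdp (hinv.eq_add_mul h m)
  have hmod : j + 1 = i + 1 + m + m * p := by ring
  have hper : Function.Periodic (cutModProd g hp 0) (m * p) :=
    (cutModProd_periodic 0).int_mul m
  rw [cutModProd_eq_iff hg hinv j 0, hmod, add_right_comm, hper, hper] at hcut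
  exact hcut

theorem cutModProd_periodic_one_of_eq_inv (hg : AssocUpTo g p)
    (hinv : InvAntiperiodic g (p + 1)) {i : ℤ} (h : g (i + 1) = (g i)⁻¹) :
    Function.Periodic (cutModProd g hp 0) 1 := by
  intro s
  have hends : g (i + 1) = g (i + 1 + p) := by rw [h, ← hinv, add_assoc, add_comm 1 p]
  have hconst (t : ℤ) : cutModProd g hp (i + 1) t =
      (g (i + 1) * segmentProd g (i + 1 + 1) (i + 1 + p)) * g (i + 1) :=
    have ht := toIocMod_mem_Ioc hp (i + 1) t
    cutProd_eq_of_ends_eq hg ht.1 ht.2 hends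
  rw [cutModProd_eq_iff hg hinv 0 (i + 1), hconst, hconst]

end Cuts

section TwoGenerators

variable {a b : Q} {g : ℤ → Q} {p : ℤ} {hp : 0 < p}

theorem cutModProd_periodic_four (hg : AssocUpTo g p) (hinv : InvAntiperiodic g (p + 1))
    (hodd : Odd p) (hp1 : p ≠ 1) (htwo : ∀ i, g (i + 2) = g i ∨ g (i + 2) = (g i)⁻¹) :
    Function.Periodic (cutModProd g hp 0) 4 := by
  have hp2 : p ≠ 2 := by rintro rfl; exact absurd hodd (by decide)
  have hp4 : p ≠ 4 := by rintro rfl; exact absurd hodd (by decide)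
  by_cases hexists : ∃ i, g (i + 2) = g i
  · obtain ⟨i, hi⟩ := hexists
    have htwo := cutModProd_periodic_of_eq (hp := hp) hg hinv two_pos (by omega) hi.symm
    simpa only [two_add_two_eq_four] using htwo.add_period htwo
  · push Not at hexists
    have hinv_two (i : ℤ) : g (i + 2) = (g i)⁻¹ := (htwo i).resolve_left (hexists i)
    have hfour : g 0 = g (0 + 4) := by
      rw [show (0 + 4 : ℤ) = 0 + 2 + 2 by norm_num, hinv_two, hinv_two, inv_inv]
    have hp3 : p ≠ 3 := by
      rintro rfl
      exact hexists 0 (by rw [hinv_two, ← hinv, hfour]; norm_num)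
    exact cutModProd_periodic_of_eq hg hinv four_pos (by omega) hfour

theorem cutModProd_periodic_one (hg : AssocUpTo g p) (hinv : InvAntiperiodic g (p + 1))
    (hmem : ∀ i, g i ∈ letters a b) : Function.Periodic (cutModProd g hp 0) 1 := by
  rcases eq_or_ne p 1 with rfl | hp1
  · exact cutModProd_periodic 0
  by_cases heq_inv : ∃ i, g (i + 1) = (g i)⁻¹
  · obtain ⟨i, hi⟩ := heq_inv
    exact cutModProd_periodic_one_of_eq_inv hg hinv hi
  by_cases heq : ∃ i, g (i + 1) = g i
  · obtain ⟨i, hi⟩ := heq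
    exact cutModProd_periodic_of_eq hg hinv one_pos (by omega) hi.symm
  push Not at heq_inv heq
  have halt := mem_pair_add_one_iff hmem heq heq_inv
  have hodd : Odd p := by
    have hends : g (p + 1) ∈ ({a, a⁻¹} : Set Q) ↔ g 0 ∈ ({a, a⁻¹} : Set Q) := by
      rw [← zero_add (p + 1), hinv, inv_mem_pair_iff]
    have heven : Even (p + 1) :=
      even_of_alternating (P := fun i ↦ g i ∈ ({a, a⁻¹} : Set Q)) halt hends
    simpa [Int.even_add_one] using heven
  have hcoprime : IsCoprime 4 p := (Int.isCoprime_two_left.2 hodd).pow_left (m := 2)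
  exact periodic_one_of_isCoprime
    (cutModProd_periodic_four hg hinv hodd hp1 (eq_or_eq_inv_add_two hmem halt))
    (cutModProd_periodic 0) hcoprime

theorem segmentProd_mul_segmentProd (hg : AssocUpTo g p) (hinv : InvAntiperiodic g (p + 1))
    (hmem : ∀ i, g i ∈ letters a b) {s : ℤ} (hs : 0 < s) (hsp : s ≤ p) :
    segmentProd g 0 s * segmentProd g s (p + 1) = segmentProd g 0 (p + 1) := by
  have hp : 0 < p := hs.trans_le hsp
  have hcut := eq_of_periodic_one (cutModProd_periodic_one (hp := hp) hg hinv hmem) s (0 + 1)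
  rw [cutModProd_eq_cutProd hs (by omega), cutModProd_eq_cutProd (by omega) (by omega),
    cutProd_add_one hp] at hcut
  simpa only [cutProd, zero_add] using hcut

theorem prod_append (u v : List Q) (hmem : ∀ x ∈ u ++ v, x ∈ letters a b) :
    u.prod * v.prod = (u ++ v).prod := by
  induction hn : (u ++ v).length using Nat.strong_induction_on generalizing u v with
  | _ n ih =>
  rcases eq_or_ne u [] with rfl | hu
  · simp
  rcases eq_or_ne v [] with rfl | hv
  · simp
  have hw : u ++ v ≠ [] := by simp [hu]
  have hu_pos : 0 < u.length := List.length_pos_iff.2 hu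
  have hv_pos : 0 < v.length := List.length_pos_iff.2 hv
  have hlen : u.length + v.length = n := List.length_append.symm.trans hn
  obtain ⟨p, rfl⟩ : ∃ p, n = p + 1 := ⟨n - 1, by omega⟩
  have hgmem := cyclicWord_mem_letters hw hmem
  have hassoc : AssocUpTo (cyclicWord (u ++ v)) p :=
    assocUpTo_of_prod_append hgmem fun u' v' hmem' hle ↦
      ih _ (Nat.lt_succ_of_le hle) u' v' hmem' rfl
  have hinv := cyclicWord_invAntiperiodic hw
  obtain ⟨hu_prod, hv_prod, huv_prod⟩ := segmentProd_cyclicWord_append u v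
  rw [hn, Nat.cast_succ] at hinv hv_prod huv_prod
  rw [← hu_prod, ← hv_prod, ← huv_prod]
  exact segmentProd_mul_segmentProd hassoc hinv hgmem (by omega) (by omega)

end TwoGenerators

/-- The products of words in `a`, `a⁻¹`, `b`, `b⁻¹`: the subloop generated by `a` and `b`. -/
def wordProds (a b : Q) : Set Q :=
  {q | ∃ w : List Q, (∀ x ∈ w, x ∈ letters a b) ∧ w.prod = q}

section WordProds

variable {a b x y z : Q}

theorem mem_wordProds_of_mem_letters (hx : x ∈ letters a b) : x ∈ wordProds a b :=
  ⟨[x], by simpa using hx, by simp⟩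

theorem one_mem_wordProds : 1 ∈ wordProds a b :=
  ⟨[], by simp, rfl⟩

theorem mul_mem_wordProds (hx : x ∈ wordProds a b) (hy : y ∈ wordProds a b) :
    x * y ∈ wordProds a b := by
  obtain ⟨u, hu, rfl⟩ := hx
  obtain ⟨v, hv, rfl⟩ := hy
  have huv : ∀ x ∈ u ++ v, x ∈ letters a b := List.forall_mem_append.2 ⟨hu, hv⟩
  exact ⟨u ++ v, huv, (prod_append u v huv).symm⟩

theorem inv_mem_wordProds (hx : x ∈ wordProds a b) : x⁻¹ ∈ wordProds a b := by
  obtain ⟨w, hw, rfl⟩ := hx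
  induction w with
  | nil => simpa only [List.prod_nil, MoufangLoop.inv_one] using one_mem_wordProds
  | cons c w ih =>
    obtain ⟨hc, hw⟩ := List.forall_mem_cons.1 hw
    rw [List.prod_cons, MoufangLoop.mul_inv_rev]
    exact mul_mem_wordProds (ih hw) (mem_wordProds_of_mem_letters (inv_mem_letters hc))

theorem mul_assoc_of_mem_wordProds (hx : x ∈ wordProds a b) (hy : y ∈ wordProds a b)
    (hz : z ∈ wordProds a b) : x * (y * z) = (x * y) * z := by
  obtain ⟨u, hu, rfl⟩ := hx
  obtain ⟨v, hv, rfl⟩ := hy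
  obtain ⟨w, hw, rfl⟩ := hz
  have huv : ∀ x ∈ u ++ v, x ∈ letters a b := List.forall_mem_append.2 ⟨hu, hv⟩
  have hvw : ∀ x ∈ v ++ w, x ∈ letters a b := List.forall_mem_append.2 ⟨hv, hw⟩
  rw [prod_append v w hvw, prod_append u v huv,
    prod_append u (v ++ w) (List.forall_mem_append.2 ⟨hu, hvw⟩),
    prod_append (u ++ v) w (List.forall_mem_append.2 ⟨huv, hw⟩), List.append_assoc]

theorem genSubloop_subset_wordProds {ld rd : Q → Q → Q} (mul_ld : ∀ x y, x * ld x y = y)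
    (rd_mul : ∀ x y, rd x y * y = x) :
    genSubloop (· * ·) ld rd 1 a b ⊆ wordProds a b := by
  have hld (x y : Q) : ld x y = x⁻¹ * y := by
    rw [← mul_right_inj x, mul_ld, MoufangLoop.mul_inv_cancel_left]
  have hrd (x y : Q) : rd x y = x * y⁻¹ := by
    rw [← mul_left_inj y, rd_mul, MoufangLoop.inv_mul_cancel_right]
  refine Set.sInter_subset_of_mem ⟨mem_wordProds_of_mem_letters (by simp [letters]),
    mem_wordProds_of_mem_letters (by simp [letters]), one_mem_wordProds,
    fun x hx y hy ↦ mul_mem_wordProds hx hy, fun x hx y hy ↦ ?_, fun x hx y hy ↦ ?_⟩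
  · exact hld x y ▸ mul_mem_wordProds (inv_mem_wordProds hx) hy
  · exact hrd x y ▸ mul_mem_wordProds hx (inv_mem_wordProds hy)

end WordProds

end MoufangLoop

/-- every Moufang loop is diassociative: any two elements of a loop
satisfying `x(y(xz)) = ((xy)x)z` generate an associative subloop (a group). -/
theorem moufang_loop_diassociative (Q : Type*) (mul ld rd : Q → Q → Q) (e : Q)
    (hQ1 : ∀ x y, ld x (mul x y) = y) (hQ2 : ∀ x y, mul x (ld x y) = y)
    (hQ3 : ∀ x y, rd (mul x y) y = x) (hQ4 : ∀ x y, mul (rd x y) y = x)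
    (hL : ∀ x, mul e x = x) (hR : ∀ x, mul x e = x)
    (hM : ∀ x y z, mul x (mul y (mul x z)) = mul (mul (mul x y) x) z) :
    ∀ a b : Q, ∀ x ∈ genSubloop mul ld rd e a b, ∀ y ∈ genSubloop mul ld rd e a b,
      ∀ z ∈ genSubloop mul ld rd e a b, mul x (mul y z) = mul (mul x y) z := by
  intro a b x hx y hy z hz
  let _ : MoufangLoop Q := .ofLeftDivision mul ld e hQ1 hQ2 hL hR hM
  have hsub : genSubloop mul ld rd e a b ⊆ MoufangLoop.wordProds a b :=
    MoufangLoop.genSubloop_subset_wordProds hQ2 hQ4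
  exact MoufangLoop.mul_assoc_of_mem_wordProds (hsub hx) (hsub hy) (hsub hz)
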